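/- arXiv:math/0402068 — 4 statements merged into one kernel-verified Lean document; each statement's English description precedes it below -/
import Mathlib

section
/- Let k be a natural number. Let R = MvPolynomial (Fin k) ℝ be the polynomial algebra in variables X₁, …, X_k, let Λ = ExteriorAlgebra ℝ (Fin k → ℝ) be the exterior algebra on ℝᵏ with standard basis e₁, …, e_k, and let T = Λ ⊗_ℝ R be the tensor product ℝ-algebra. Set ω = Σ_{i=1}^{k} (ι e_i) ⊗ X_i ∈ T and let L : T → T be the ℝ-linear map of left multiplication by ω. Then: (i) L ∘ L = 0, so the range of L is contained in the kernel of L; (ii) the element (ι e₁ · ι e₂ ⋯ ι e_k) ⊗ 1 lies in ker L but not in range L; (iii) ker L = range L + ℝ · ((ι e₁ · ι e₂ ⋯ ι e_k) ⊗ 1); consequently the quotient real vector space ker L / range L is one-dimensional, spanned by the class of (ι e₁ ⋯ ι e_k) ⊗ 1. -/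
open scoped TensorProduct

set_option synthInstance.maxHeartbeats 1000000
set_option maxHeartbeats 1000000

/-- The Koszul-type element `ω = Σᵢ (ι eᵢ) ⊗ Xᵢ` of `Λ(ℝᵏ) ⊗ ℝ[X₁,…,X_k]`. -/
noncomputable def koszulElt (k : ℕ) :
    ExteriorAlgebra ℝ (Fin k → ℝ) ⊗[ℝ] MvPolynomial (Fin k) ℝ :=
  ∑ i : Fin k, (ExteriorAlgebra.ι ℝ (Pi.single i 1 : Fin k → ℝ)) ⊗ₜ[ℝ] MvPolynomial.X i

/-- Left multiplication by `koszulElt k` (the Berezinian differential `d_V`). -/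
noncomputable def koszulMul (k : ℕ) :
    ExteriorAlgebra ℝ (Fin k → ℝ) ⊗[ℝ] MvPolynomial (Fin k) ℝ →ₗ[ℝ]
      ExteriorAlgebra ℝ (Fin k → ℝ) ⊗[ℝ] MvPolynomial (Fin k) ℝ :=
  LinearMap.mulLeft ℝ (koszulElt k)

/-- The top exterior product `(ι e₁ ⋯ ι e_k) ⊗ 1`. -/
noncomputable def koszulTop (k : ℕ) :
    ExteriorAlgebra ℝ (Fin k → ℝ) ⊗[ℝ] MvPolynomial (Fin k) ℝ :=
  ((List.ofFn fun i : Fin k =>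
    ExteriorAlgebra.ι ℝ (Pi.single i 1 : Fin k → ℝ)).prod) ⊗ₜ[ℝ] 1

/-!
Write `eᵢ` for left multiplication by the `i`-th generator of the exterior algebra and `cᵢ` for the
contraction with the `i`-th coordinate, so that `eⱼ cᵢ + cᵢ eⱼ = δᵢⱼ`. The map
`sᵢ = cᵢ ⊗ (division by Xᵢ, discarding the remainder)` satisfies `d sᵢ + sᵢ d = 1 - pᵢ`, where
`pᵢ = eᵢ cᵢ ⊗ (Xᵢ ↦ 0)`. Hence every cycle is homologous to its image under the product of all the
`pᵢ`. This product sets all variables to zero and maps the exterior algebra into the right ideal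
generated by the top product, which consists of the scalar multiples of the top product. Finally,
setting the variables to zero annihilates all boundaries, but no nonzero multiple of the top
product.
-/

theorem sum_mul_self_eq_zero_of_anticommute {A σ : Type*} [NonUnitalNonAssocSemiring A]
    (s : Finset σ) (a : σ → A) (sq : ∀ i, a i * a i = 0)
    (anticomm : ∀ i j, a i * a j + a j * a i = 0) :
    (∑ i ∈ s, a i) * ∑ i ∈ s, a i = 0 := by
  classical
  induction s using Finset.induction_on with
  | empty => simp
  | insert i s hi ih =>
    have cross : a i * ∑ j ∈ s, a j + (∑ j ∈ s, a j) * a i = 0 := by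
      rw [Finset.mul_sum, Finset.sum_mul, ← Finset.sum_add_distrib]
      exact Finset.sum_eq_zero fun j _ ↦ anticomm i j
    rw [Finset.sum_insert hi, add_mul, mul_add, mul_add, sq, ih, zero_add, add_zero, cross]

section Homotopy

variable {R M : Type*} [Ring R] [AddCommGroup M] [Module R M]

theorem apply_mem_ker_of_homotopy {d s p : M →ₗ[R] M} (hd : d ∘ₗ d = 0)
    (hs : d ∘ₗ s + s ∘ₗ d = LinearMap.id - p) {x : M} (hx : x ∈ LinearMap.ker d) :
    p x ∈ LinearMap.ker d := by
  have hp : d (s x) + s (d x) = x - p x := LinearMap.congr_fun hs x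
  rw [LinearMap.mem_ker] at hx ⊢
  rw [hx, map_zero, add_zero] at hp
  have hdd : d (d (s x)) = 0 := LinearMap.congr_fun hd (s x)
  rwa [hp, map_sub, hx, zero_sub, neg_eq_zero] at hdd

theorem sub_apply_mem_range_of_homotopy {d s p : M →ₗ[R] M}
    (hs : d ∘ₗ s + s ∘ₗ d = LinearMap.id - p) {x : M} (hx : x ∈ LinearMap.ker d) :
    x - p x ∈ LinearMap.range d := by
  have hp : d (s x) + s (d x) = x - p x := LinearMap.congr_fun hs x
  rw [LinearMap.mem_ker.mp hx, map_zero, add_zero] at hp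
  exact ⟨s x, hp⟩

theorem sub_list_prod_apply_mem_range_of_homotopy {σ : Type*} {d : Module.End R M}
    {s p : σ → Module.End R M}
    (hd : d ∘ₗ d = 0) (hs : ∀ i, d ∘ₗ s i + s i ∘ₗ d = LinearMap.id - p i) (l : List σ) {x : M}
    (hx : x ∈ LinearMap.ker d) :
    x - (l.map p).prod x ∈ LinearMap.range d := by
  suffices (l.map p).prod x ∈ LinearMap.ker d ∧ x - (l.map p).prod x ∈ LinearMap.range d from
    this.2
  induction l with
  | nil => simpa using hx
  | cons i l ih =>
    obtain ⟨cycle, boundary⟩ := ih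
    rw [List.map_cons, List.prod_cons, Module.End.mul_apply]
    refine ⟨apply_mem_ker_of_homotopy hd (hs i) cycle, ?_⟩
    rw [← sub_add_sub_cancel x ((l.map p).prod x)]
    exact add_mem boundary (sub_apply_mem_range_of_homotopy (hs i) cycle)

end Homotopy

/-- Scalar multiplication `R ≃ R ∙ x` for a vector `x` with trivial annihilator. -/
noncomputable def spanSingletonEquiv {R M : Type*} [Ring R] [AddCommGroup M] [Module R M] {x : M}
    (hx : ∀ c : R, c • x = 0 → c = 0) :
    R ≃ₗ[R] (R ∙ x) :=
  LinearEquiv.ofInjective (LinearMap.toSpanSingleton R M x)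
      ((injective_iff_map_eq_zero _).mpr hx) ≪≫ₗ
    LinearEquiv.ofEq _ _ (LinearMap.span_singleton_eq_range R M x).symm

/-- The exterior algebra of `M` tensored with the polynomial ring in variables indexed by `σ`. -/
abbrev KoszulAlgebra (R M σ : Type*) [CommRing R] [AddCommGroup M] [Module R M] : Type _ :=
  ExteriorAlgebra R M ⊗[R] MvPolynomial σ R

namespace KoszulAlgebra

section Exterior

open ExteriorAlgebra

variable {R M σ : Type*} [CommRing R] [AddCommGroup M] [Module R M]

/-- Contraction of the exterior algebra with a linear form, as the contraction of the Clifford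
algebra of the zero quadratic form. -/
noncomputable def contract (d : Module.Dual R M) : Module.End R (ExteriorAlgebra R M) :=
  CliffordAlgebra.contractLeft (Q := (0 : QuadraticForm R M)) d

theorem contract_one (d : Module.Dual R M) : contract d 1 = 0 :=
  CliffordAlgebra.contractLeft_one _ _

theorem contract_ι_mul (d : Module.Dual R M) (v : M) (a : ExteriorAlgebra R M) :
    contract d (ι R v * a) = d v • a - ι R v * contract d a :=
  CliffordAlgebra.contractLeft_ι_mul _ _ _

theorem contract_prod_ι_mul {d : Module.Dual R M} {l : List M} (hl : ∀ v ∈ l, d v = 0)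
    (a : ExteriorAlgebra R M) :
    contract d ((l.map (ι R)).prod * a) =
      (-1) ^ l.length * ((l.map (ι R)).prod * contract d a) := by
  induction l with
  | nil => simp
  | cons v l ih =>
    rw [List.forall_mem_cons] at hl
    rw [List.map_cons, List.prod_cons, mul_assoc, contract_ι_mul, hl.1, ih hl.2,
      List.length_cons, pow_succ', zero_smul, zero_sub, neg_one_mul, neg_mul, neg_inj,
      ← mul_assoc, ((Commute.neg_one_right (ι R v)).pow_right _).eq]
    simp only [mul_assoc]

theorem prod_ι_mul_ι (l : List M) (v : M) :
    (l.map (ι R)).prod * ι R v = (-1) ^ l.length * (ι R v * (l.map (ι R)).prod) := by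
  induction l with
  | nil => simp
  | cons w l ih =>
    have swap : ι R w * ι R v = -(ι R v * ι R w) :=
      eq_neg_of_add_eq_zero_left (ι_add_mul_swap w v)
    rw [List.map_cons, List.prod_cons, mul_assoc, ih, ← mul_assoc,
      ((Commute.neg_one_right (ι R w)).pow_right _).eq, mul_assoc, ← mul_assoc (ι R w), swap,
      List.length_cons, pow_succ]
    simp only [mul_assoc, neg_mul, one_mul]

theorem ι_mul_prod_ι_eq_zero {l : List M} {v : M} (hv : v ∈ l) :
    ι R v * (l.map (ι R)).prod = 0 := by
  obtain ⟨i, rfl⟩ := List.mem_iff_get.mp hv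
  have prod_ofFn : (List.ofFn fun j ↦ ι R (l.get j)).prod = (l.map (ι R)).prod := by
    rw [← Function.comp_def, ← List.map_ofFn, List.ofFn_get]
  rw [← prod_ofFn, ι_mul_prod_list]

theorem prod_ι_mul_ι_eq_zero {l : List M} {v : M}
    (hv : v ∈ Submodule.span R {w | w ∈ l}) : (l.map (ι R)).prod * ι R v = 0 := by
  induction hv using Submodule.span_induction with
  | mem w hw => rw [prod_ι_mul_ι, ι_mul_prod_ι_eq_zero hw, mul_zero]
  | zero => simp
  | add v w _ _ hv hw => rw [map_add, mul_add, hv, hw, add_zero]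
  | smul c v _ hv => rw [map_smul, mul_smul_comm, hv, smul_zero]

theorem prod_ι_mul_eq_smul {l : List M} (hl : Submodule.span R {w | w ∈ l} = ⊤)
    (a : ExteriorAlgebra R M) :
    (l.map (ι R)).prod * a = algebraMapInv a • (l.map (ι R)).prod := by
  induction a using ExteriorAlgebra.induction with
  | algebraMap r => rw [algebraMap_leftInverse, Algebra.smul_def, Algebra.commutes]
  | ι v =>
    rw [prod_ι_mul_ι_eq_zero (hl ▸ Submodule.mem_top)]
    simp [algebraMapInv]
  | mul a b ha hb => rw [← mul_assoc, ha, smul_mul_assoc, hb, smul_smul, map_mul]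
  | add a b ha hb => rw [mul_add, ha, hb, map_add, add_smul]

/-- The ordered product of the basis vectors indexed by `l`, in the exterior algebra. -/
noncomputable def basisWedge (B : Module.Basis σ R M) (l : List σ) : ExteriorAlgebra R M :=
  ((l.map B).map (ι R)).prod

variable (B : Module.Basis σ R M)

theorem basisWedge_cons (i : σ) (l : List σ) :
    basisWedge B (i :: l) = ι R (B i) * basisWedge B l :=
  List.prod_cons

theorem contract_coord_basisWedge_mul {i : σ} {l : List σ} (hi : i ∉ l)
    (a : ExteriorAlgebra R M) :
    contract (B.coord i) (basisWedge B l * a) =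
      (-1) ^ l.length * (basisWedge B l * contract (B.coord i) a) := by
  have coord_eq_zero : ∀ v ∈ l.map B, B.coord i v = 0 := by
    simp only [List.forall_mem_map, Module.Basis.coord_apply, Module.Basis.repr_self]
    exact fun j hj ↦ Finsupp.single_eq_of_ne (ne_of_mem_of_not_mem hj hi).symm
  simpa only [List.length_map, basisWedge] using contract_prod_ι_mul coord_eq_zero a

theorem eq_zero_of_smul_basisWedge_eq_zero {l : List σ} (hl : l.Nodup) {c : R}
    (hc : c • basisWedge B l = 0) : c = 0 := by
  induction l with
  | nil => simpa [basisWedge, ← Algebra.algebraMap_eq_smul_one] using hc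
  | cons i l ih =>
    obtain ⟨hi, hl⟩ := List.nodup_cons.mp hl
    have contract_eq_zero : contract (B.coord i) (basisWedge B l) = 0 := by
      simpa [contract_one] using contract_coord_basisWedge_mul B hi 1
    apply ih hl
    simpa [basisWedge_cons, contract_ι_mul, contract_eq_zero] using
      congrArg (contract (B.coord i)) hc

theorem basisWedge_mul_eq_smul {l : List σ} (hl : ∀ i, i ∈ l) (a : ExteriorAlgebra R M) :
    basisWedge B l * a = algebraMapInv a • basisWedge B l := by
  refine prod_ι_mul_eq_smul (top_le_iff.mp ?_) a
  rw [← B.span_eq]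
  exact Submodule.span_mono <| Set.range_subset_iff.mpr fun i ↦ List.mem_map_of_mem (hl i)

/-- The endomorphism `eᵢ cᵢ` of the exterior algebra: on products of basis vectors it is the
identity if the `i`-th one occurs and zero otherwise. -/
noncomputable def occurrence (i : σ) : Module.End R (ExteriorAlgebra R M) :=
  LinearMap.mulLeft R (ι R (B i)) * contract (B.coord i)

theorem exists_list_prod_occurrence_apply_eq {l : List σ} (hl : l.Nodup) (a : ExteriorAlgebra R M) :
    ∃ b, (l.map (occurrence B)).prod a = basisWedge B l * b := by
  induction l with
  | nil => exact ⟨a, by simp [basisWedge]⟩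
  | cons i l ih =>
    obtain ⟨hi, hl⟩ := List.nodup_cons.mp hl
    obtain ⟨b, hb⟩ := ih hl
    refine ⟨(-1) ^ l.length * contract (B.coord i) b, ?_⟩
    rw [List.map_cons, List.prod_cons, Module.End.mul_apply, hb, occurrence, Module.End.mul_apply,
      contract_coord_basisWedge_mul B hi, LinearMap.mulLeft_apply, basisWedge_cons, mul_assoc,
      ← mul_assoc (basisWedge B l), ((Commute.neg_one_right (basisWedge B l)).pow_right _).eq,
      mul_assoc]

theorem list_prod_occurrence_apply_mem_span {l : List σ} (hl : l.Nodup) (hmem : ∀ i, i ∈ l)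
    (a : ExteriorAlgebra R M) : (l.map (occurrence B)).prod a ∈ R ∙ basisWedge B l := by
  obtain ⟨b, hb⟩ := exists_list_prod_occurrence_apply_eq B hl a
  rw [hb, basisWedge_mul_eq_smul B hmem]
  exact Submodule.smul_mem _ _ (Submodule.mem_span_singleton_self _)

theorem mulLeft_ι_mul_contract_coord_add (i j : σ) :
    LinearMap.mulLeft R (ι R (B j)) * contract (B.coord i) +
      contract (B.coord i) * LinearMap.mulLeft R (ι R (B j)) = B.coord i (B j) • 1 := by
  ext a
  simp [contract_ι_mul]

end Exterior

section Polynomial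

open MvPolynomial

variable {R σ : Type*} [CommRing R]

/-- Division by `X i`, discarding the remainder, as a linear map. -/
noncomputable def divX (i : σ) : Module.End R (MvPolynomial σ R) where
  toFun f := f.divMonomial (Finsupp.single i 1)
  map_add' f g := add_divMonomial f g _
  map_smul' c f := by ext; simp

/-- The remainder of division by `X i`, that is, the substitution `X i ↦ 0`, as a linear map. -/
noncomputable def modX (i : σ) : Module.End R (MvPolynomial σ R) :=
  1 - LinearMap.mulLeft R (X i) * divX i

theorem divX_mul_mulLeft_X_self (i : σ) :
    divX i * LinearMap.mulLeft R (X i) = 1 :=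
  LinearMap.ext fun f ↦ X_mul_divMonomial i f

theorem divX_mul_mulLeft_X_of_ne {i j : σ} (h : i ≠ j) :
    divX i * LinearMap.mulLeft R (X j) = LinearMap.mulLeft R (X j) * divX i := by
  classical
  refine LinearMap.ext fun f ↦ MvPolynomial.ext _ _ fun m ↦ ?_
  have mem_support : j ∈ (Finsupp.single i 1 + m).support ↔ j ∈ m.support := by simp [h]
  simp only [divX, Module.End.mul_apply, LinearMap.mulLeft_apply, LinearMap.coe_mk, AddHom.coe_mk,
    coeff_divMonomial, coeff_X_mul', mem_support]
  refine if_ctx_congr Iff.rfl (fun hj ↦ ?_) fun _ ↦ rfl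
  rw [add_tsub_assoc_of_le]
  simpa [Nat.one_le_iff_ne_zero] using hj

theorem coeff_modX (i : σ) (f : MvPolynomial σ R) (m : σ →₀ ℕ) :
    coeff m (modX i f) = if m i = 0 then coeff m f else 0 := by
  have modX_apply : modX i f = f.modMonomial (Finsupp.single i 1) :=
    sub_eq_of_eq_add' (divMonomial_add_modMonomial_single f i).symm
  rw [modX_apply]
  split_ifs with hm
  · exact coeff_modMonomial_of_not_le f (by simp [hm])
  · exact coeff_modMonomial_of_le f (by simpa [Nat.one_le_iff_ne_zero] using hm)

theorem coeff_list_prod_modX (l : List σ) (f : MvPolynomial σ R) (m : σ →₀ ℕ) :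
    coeff m ((l.map modX).prod f) = if ∀ i ∈ l, m i = 0 then coeff m f else 0 := by
  induction l with
  | nil => simp
  | cons i l ih =>
    simp only [List.map_cons, List.prod_cons, Module.End.mul_apply, coeff_modX, ih,
      List.forall_mem_cons, ite_and]

theorem list_prod_modX_apply {l : List σ} (hl : ∀ i, i ∈ l) (f : MvPolynomial σ R) :
    (l.map modX).prod f = C (constantCoeff f) := by
  classical
  ext m
  have all_zero : (∀ i ∈ l, m i = 0) ↔ 0 = m := by
    simp [hl, DFunLike.ext_iff, eq_comm]
  simp only [coeff_list_prod_modX, all_zero, coeff_C, constantCoeff_eq]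
  refine if_ctx_congr Iff.rfl (fun hm ↦ ?_) fun _ ↦ rfl
  rw [hm]

end Polynomial

section Koszul

open ExteriorAlgebra MvPolynomial

variable {R M σ : Type*} [CommRing R] [AddCommGroup M] [Module R M] (B : Module.Basis σ R M)

/-- The canonical element `Σᵢ (ι bᵢ) ⊗ Xᵢ` of a basis `b`; it generalizes `koszulElt`. -/
noncomputable def element [Fintype σ] : KoszulAlgebra R M σ :=
  ∑ i, ι R (B i) ⊗ₜ[R] X i

/-- Left multiplication by the canonical element; it generalizes `koszulMul`. -/
noncomputable def differential [Fintype σ] : Module.End R (KoszulAlgebra R M σ) :=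
  LinearMap.mulLeft R (element B)

/-- Left multiplication by the `i`-th term `(ι bᵢ) ⊗ Xᵢ` of the canonical element. -/
noncomputable def summand (i : σ) : Module.End R (KoszulAlgebra R M σ) :=
  TensorProduct.map (LinearMap.mulLeft R (ι R (B i))) (LinearMap.mulLeft R (X i))

/-- The product of the basis vectors in the order given by `l`; it generalizes `koszulTop`, where
`l` enumerates the basis. -/
noncomputable def wedge (l : List σ) : KoszulAlgebra R M σ :=
  basisWedge B l ⊗ₜ[R] 1

/-- The homotopy `sᵢ` from the identity to `retraction B i`. -/
noncomputable def homotopy (i : σ) : Module.End R (KoszulAlgebra R M σ) :=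
  TensorProduct.map (contract (B.coord i)) (divX i)

/-- The endomorphism `pᵢ`, which projects onto the multiples of the `i`-th generator not involving
`X i`. -/
noncomputable def retraction (i : σ) : Module.End R (KoszulAlgebra R M σ) :=
  TensorProduct.map (occurrence B i) (modX i)

variable (R M σ) in
/-- The augmentation sending all polynomial variables to zero. -/
noncomputable def augmentation : KoszulAlgebra R M σ →ₐ[R] ExteriorAlgebra R M :=
  (Algebra.TensorProduct.rid R R (ExteriorAlgebra R M)).toAlgHom.comp
    (Algebra.TensorProduct.map (AlgHom.id R _) (aeval (0 : σ → R)))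

theorem augmentation_tmul (a : ExteriorAlgebra R M) (f : MvPolynomial σ R) :
    augmentation R M σ (a ⊗ₜ f) = aeval (0 : σ → R) f • a := by
  simp [augmentation]

theorem list_prod_retraction (l : List σ) :
    (l.map (retraction B)).prod =
      TensorProduct.map (l.map (occurrence B)).prod (l.map modX).prod := by
  induction l with
  | nil => exact TensorProduct.map_one.symm
  | cons i l ih =>
    simp only [List.map_cons, List.prod_cons, ih, retraction, ← TensorProduct.map_mul]

theorem list_prod_retraction_apply_mem_span {l : List σ} (hl : l.Nodup) (hmem : ∀ i, i ∈ l)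
    (x : KoszulAlgebra R M σ) : (l.map (retraction B)).prod x ∈ R ∙ wedge B l := by
  induction x using TensorProduct.induction_on with
  | zero => simp
  | add x y hx hy => rw [map_add]; exact add_mem hx hy
  | tmul a f =>
    obtain ⟨c, hc⟩ := Submodule.mem_span_singleton.mp
      (list_prod_occurrence_apply_mem_span B hl hmem a)
    refine Submodule.mem_span_singleton.mpr ⟨constantCoeff f * c, ?_⟩
    rw [list_prod_retraction, TensorProduct.map_tmul, ← hc, list_prod_modX_apply hmem, wedge,
      C_eq_smul_one, TensorProduct.tmul_smul, ← TensorProduct.smul_tmul', smul_smul]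

theorem summand_mul_homotopy_add_of_ne {i j : σ} (h : i ≠ j) :
    summand B j * homotopy B i + homotopy B i * summand B j = 0 := by
  rw [summand, homotopy, ← TensorProduct.map_mul, ← TensorProduct.map_mul,
    divX_mul_mulLeft_X_of_ne h, ← TensorProduct.map_add_left, mulLeft_ι_mul_contract_coord_add,
    Module.Basis.coord_apply, Module.Basis.repr_self, Finsupp.single_eq_of_ne h, zero_smul,
    TensorProduct.map_zero_left]

theorem summand_mul_homotopy_add_self (i : σ) :
    summand B i * homotopy B i + homotopy B i * summand B i = 1 - retraction B i := by
  have mulLeft_X_mul_divX : LinearMap.mulLeft R (X i) * divX i = 1 - modX i := by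
    rw [modX, sub_sub_cancel]
  have occurrence_add_contract_mul :
      occurrence B i + contract (B.coord i) * LinearMap.mulLeft R (ι R (B i)) = 1 := by
    simpa [occurrence] using mulLeft_ι_mul_contract_coord_add B i i
  rw [summand, homotopy, ← TensorProduct.map_mul, ← TensorProduct.map_mul, divX_mul_mulLeft_X_self,
    mulLeft_X_mul_divX, ← occurrence, retraction]
  refine eq_sub_of_add_eq (G := Module.End R (KoszulAlgebra R M σ)) ?_
  rw [add_right_comm, ← TensorProduct.map_add_right, sub_add_cancel, ← TensorProduct.map_add_left,
    occurrence_add_contract_mul, TensorProduct.map_one]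

variable [Fintype σ]

theorem differential_eq_sum : differential B = ∑ i, summand B i := by
  ext a f
  simp [summand, differential, element, Finset.sum_mul]

theorem element_mul_self : element B * element B = 0 := by
  refine sum_mul_self_eq_zero_of_anticommute _ _ (fun i ↦ ?_) fun i j ↦ ?_
  · rw [Algebra.TensorProduct.tmul_mul_tmul, ι_sq_zero, TensorProduct.zero_tmul]
  · rw [Algebra.TensorProduct.tmul_mul_tmul, Algebra.TensorProduct.tmul_mul_tmul,
      mul_comm (X j) (X i), ← TensorProduct.add_tmul, ι_add_mul_swap, TensorProduct.zero_tmul]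

theorem differential_comp_self : differential B ∘ₗ differential B = 0 := by
  rw [differential, ← LinearMap.mulLeft_mul, element_mul_self, LinearMap.mulLeft_zero_eq_zero]

theorem wedge_mem_ker {l : List σ} (hmem : ∀ i, i ∈ l) :
    wedge B l ∈ LinearMap.ker (differential B) := by
  rw [LinearMap.mem_ker, differential, LinearMap.mulLeft_apply, element, wedge, Finset.sum_mul]
  refine Finset.sum_eq_zero fun i _ ↦ ?_
  rw [Algebra.TensorProduct.tmul_mul_tmul, basisWedge,
    ι_mul_prod_ι_eq_zero (List.mem_map_of_mem (hmem i)), TensorProduct.zero_tmul]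

theorem augmentation_differential (x : KoszulAlgebra R M σ) :
    augmentation R M σ (differential B x) = 0 := by
  rw [differential, LinearMap.mulLeft_apply, map_mul, element, map_sum]
  simp [augmentation_tmul]

theorem eq_zero_of_smul_wedge_mem_range {l : List σ} (hl : l.Nodup) {c : R}
    (hc : c • wedge B l ∈ LinearMap.range (differential B)) : c = 0 := by
  obtain ⟨x, hx⟩ := hc
  apply eq_zero_of_smul_basisWedge_eq_zero B hl
  have := augmentation_differential B x
  rwa [hx, map_smul, wedge, augmentation_tmul, map_one, one_smul] at this

theorem differential_comp_homotopy_add (i : σ) :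
    differential B ∘ₗ homotopy B i + homotopy B i ∘ₗ differential B =
      LinearMap.id - retraction B i := by
  simp only [← Module.End.mul_eq_comp, differential_eq_sum, Finset.sum_mul, Finset.mul_sum,
    ← Finset.sum_add_distrib]
  rw [Finset.sum_eq_single_of_mem i (Finset.mem_univ i) fun j _ hj ↦
    summand_mul_homotopy_add_of_ne B hj.symm, summand_mul_homotopy_add_self]
  rfl

theorem ker_differential {l : List σ} (hl : l.Nodup) (hmem : ∀ i, i ∈ l) :
    LinearMap.ker (differential B) = LinearMap.range (differential B) ⊔ (R ∙ wedge B l) := by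
  apply le_antisymm
  · intro x hx
    have boundary := sub_list_prod_apply_mem_range_of_homotopy (differential_comp_self B)
      (differential_comp_homotopy_add B) l hx
    rw [← sub_add_cancel x ((l.map (retraction B)).prod x)]
    exact Submodule.add_mem_sup boundary (list_prod_retraction_apply_mem_span B hl hmem x)
  · exact sup_le (LinearMap.range_le_ker_iff.mpr (differential_comp_self B))
      ((Submodule.span_singleton_le_iff_mem _ _).mpr (wedge_mem_ker B hmem))

theorem map_mkQ_ker_differential {l : List σ} (hl : l.Nodup) (hmem : ∀ i, i ∈ l) :
    (LinearMap.ker (differential B)).map (LinearMap.range (differential B)).mkQ =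
      R ∙ (LinearMap.range (differential B)).mkQ (wedge B l) := by
  rw [ker_differential B hl hmem, Submodule.map_sup, Submodule.mkQ_map_self, bot_sup_eq,
    Submodule.map_span, Set.image_singleton]

/-- Scalar multiplication identifies `R` with the homology of the Koszul differential, realized as
in `berezinian_module_computation`. -/
noncomputable def homologyEquiv {l : List σ} (hl : l.Nodup) (hmem : ∀ i, i ∈ l) :
    R ≃ₗ[R] (LinearMap.ker (differential B)).map (LinearMap.range (differential B)).mkQ :=
  spanSingletonEquiv (fun _ hc ↦ eq_zero_of_smul_wedge_mem_range B hl
      ((Submodule.Quotient.mk_eq_zero _).mp hc)) ≪≫ₗ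
    LinearEquiv.ofEq _ _ (map_mkQ_ker_differential B hl hmem).symm

end Koszul

end KoszulAlgebra

open KoszulAlgebra in
theorem berezinian_module_computation_general {R M σ : Type*} [CommRing R] [Nontrivial R]
    [AddCommGroup M] [Module R M] [Fintype σ] (B : Module.Basis σ R M) {l : List σ}
    (hl : l.Nodup) (hmem : ∀ i, i ∈ l) :
    (differential B ∘ₗ differential B = 0) ∧
    (wedge B l ∈ LinearMap.ker (differential B) ∧
      wedge B l ∉ LinearMap.range (differential B)) ∧
    (LinearMap.ker (differential B) = LinearMap.range (differential B) ⊔ (R ∙ wedge B l)) ∧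
    (Submodule.map (LinearMap.range (differential B)).mkQ (LinearMap.ker (differential B))
      = (R ∙ ((LinearMap.range (differential B)).mkQ (wedge B l)))) ∧
    Module.Free R
      (Submodule.map (LinearMap.range (differential B)).mkQ (LinearMap.ker (differential B))) ∧
    Module.finrank R
      (Submodule.map (LinearMap.range (differential B)).mkQ
        (LinearMap.ker (differential B))) = 1 := by
  refine ⟨differential_comp_self B, ⟨wedge_mem_ker B hmem, fun h ↦ ?_⟩, ker_differential B hl hmem,
    map_mkQ_ker_differential B hl hmem, Module.Free.of_equiv (homologyEquiv B hl hmem), ?_⟩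
  · exact one_ne_zero (eq_zero_of_smul_wedge_mem_range B hl ((one_smul R (wedge B l)).symm ▸ h))
  · rw [← (homologyEquiv B hl hmem).finrank_eq, Module.finrank_self]

theorem koszulMul_eq_differential (k : ℕ) :
    koszulMul k = KoszulAlgebra.differential (Pi.basisFun ℝ (Fin k)) := by
  simp only [koszulMul, koszulElt, KoszulAlgebra.differential, KoszulAlgebra.element,
    Pi.basisFun_apply]

theorem koszulTop_eq_wedge (k : ℕ) :
    koszulTop k = KoszulAlgebra.wedge (Pi.basisFun ℝ (Fin k)) (List.finRange k) := by
  simp only [koszulTop, KoszulAlgebra.wedge, KoszulAlgebra.basisWedge, List.ofFn_eq_map,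
    List.map_map, Function.comp_def, Pi.basisFun_apply]

/-- Section 1.8 of the paper: the homology of `(K(V), d_V)` with `V = ℝ^(0,k)` is
one-dimensional, spanned by the class of the top product.  (i) `d_V ∘ d_V = 0`;
(ii) the top product is a cycle and not a boundary; (iii) every cycle is a
boundary plus a real multiple of the top product; consequently the quotient
`ker d_V / range d_V` (realized as the image of the kernel in the quotient by the
range) is one-dimensional, spanned by the class of the top product. -/
theorem berezinian_module_computation (k : ℕ) :
    (koszulMul k ∘ₗ koszulMul k = 0) ∧
    (koszulTop k ∈ LinearMap.ker (koszulMul k) ∧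
      koszulTop k ∉ LinearMap.range (koszulMul k)) ∧
    (LinearMap.ker (koszulMul k)
      = LinearMap.range (koszulMul k) ⊔ (ℝ ∙ koszulTop k)) ∧
    (Submodule.map (LinearMap.range (koszulMul k)).mkQ (LinearMap.ker (koszulMul k))
      = (ℝ ∙ ((LinearMap.range (koszulMul k)).mkQ (koszulTop k)))) ∧
    Module.finrank ℝ
      (Submodule.map (LinearMap.range (koszulMul k)).mkQ
        (LinearMap.ker (koszulMul k))) = 1 := by
  obtain ⟨hsq, htop, hker, hmap, -, hrank⟩ := berezinian_module_computation_general
    (Pi.basisFun ℝ (Fin k)) (List.nodup_finRange k) List.mem_finRange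
  rw [koszulMul_eq_differential, koszulTop_eq_wedge]
  exact ⟨hsq, htop, hker, hmap, hrank⟩
end

section
/- Let n be a natural number and let Λ = ExteriorAlgebra ℝ (Fin n → ℝ), with e₁, …, eₙ the standard basis of ℝⁿ. For a linear functional d on ℝⁿ let ∂_d : Λ → Λ denote left contraction (interior product) by d, i.e. the unique ℝ-linear operator satisfying ∂_d(1) = 0, ∂_d(ι x) = d(x)·1 for x ∈ ℝⁿ, and ∂_d(ι x · ω) = d(x)·ω − ι x · ∂_d(ω) for all ω ∈ Λ. Let T : Λ → ℝ be a linear map such that T(∂_d(ω)) = 0 for every linear functional d on ℝⁿ and every ω ∈ Λ, and such that T(ι e₁ · ι e₂ ⋯ ι eₙ) = 0. Then T = 0. (Hence linear functionals vanishing on all contractions form a space of dimension at most one.) -/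
/-!
If the factor `eᵢ` is missing from a basis monomial `e_s`, then `∂ᵢ e_s = 0`, so the Leibniz rule
gives `e_s = ∂ᵢ (eᵢ e_s)`. Every basis monomial except the top one is therefore a derivative, and a
translation-invariant functional is determined by its value on the top monomial.
-/

section Contraction

open CliffordAlgebra

variable {R M : Type*} [CommRing R] [AddCommGroup M] [Module R M] {Q : QuadraticForm R M}
  {d : Module.Dual R M}

theorem eq_contractLeft_of_leibniz {D : CliffordAlgebra Q →ₗ[R] CliffordAlgebra Q}
    (hD_one : D 1 = 0) (hD_leibniz : ∀ x ω, D (ι Q x * ω) = d x • ω - ι Q x * D ω) :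
    D = contractLeft d := by
  ext ω
  induction ω using CliffordAlgebra.left_induction with
  | algebraMap r =>
    rw [Algebra.algebraMap_eq_smul_one, map_smul, map_smul, hD_one, contractLeft_one]
  | add ω η hω hη => rw [map_add, map_add, hω, hη]
  | ι_mul ω x hω => rw [hD_leibniz, contractLeft_ι_mul, hω]

theorem contractLeft_prod_map_ι_eq_zero {l : List M} (hl : ∀ x ∈ l, d x = 0) :
    contractLeft d (l.map (ι Q)).prod = 0 := by
  induction l with
  | nil => rw [List.map_nil, List.prod_nil, contractLeft_one]
  | cons x l ih =>
    obtain ⟨hx, hl⟩ := List.forall_mem_cons.1 hl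
    rw [List.map_cons, List.prod_cons, contractLeft_ι_mul, hx, ih hl, zero_smul, mul_zero, sub_zero]

theorem contractLeft_ι_mul_eq_self {x : M} {ω : CliffordAlgebra Q} (hx : d x = 1)
    (hω : contractLeft d ω = 0) : contractLeft d (ι Q x * ω) = ω := by
  rw [contractLeft_ι_mul, hx, hω, one_smul, mul_zero, sub_zero]

end Contraction

section Basis

open CliffordAlgebra (contractLeft)
open Module (Basis)

variable {R M : Type*} [CommRing R] [AddCommGroup M] [Module R M]

theorem basis_exteriorAlgebra_eq_prod_map_orderEmbOfFin {I : Type*} [LinearOrder I]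
    (b : Basis I R M) {s : Finset I} {k : ℕ} (hs : s.card = k) :
    b.ExteriorAlgebra s =
      ((List.ofFn (b ∘ s.orderEmbOfFin hs)).map (ExteriorAlgebra.ι R)).prod := by
  rw [ExteriorAlgebra.basis_apply_ofCard b hs, ExteriorAlgebra.ιMulti_family,
    ExteriorAlgebra.ιMulti_apply, List.map_ofFn]
  rfl

theorem basis_exteriorAlgebra_univ {n : ℕ} (b : Basis (Fin n) R M) :
    b.ExteriorAlgebra Finset.univ = (List.ofFn fun i => ExteriorAlgebra.ι R (b i)).prod := by
  have enum_eq_id : ⇑(Finset.univ.orderEmbOfFin (Finset.card_fin n)) = id :=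
    (Finset.orderEmbOfFin_unique _ (fun i => Finset.mem_univ i) strictMono_id).symm
  rw [basis_exteriorAlgebra_eq_prod_map_orderEmbOfFin b (Finset.card_fin n), enum_eq_id,
    List.map_ofFn]
  rfl

theorem contractLeft_coord_basis_exteriorAlgebra_of_notMem {I : Type*} [LinearOrder I]
    (b : Basis I R M) {s : Finset I} {i : I} (hi : i ∉ s) :
    contractLeft (b.coord i) (b.ExteriorAlgebra s) = 0 := by
  rw [basis_exteriorAlgebra_eq_prod_map_orderEmbOfFin b rfl]
  refine contractLeft_prod_map_ι_eq_zero (List.forall_mem_ofFn_iff.2 fun j => ?_)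
  have hne : s.orderEmbOfFin rfl j ≠ i := ne_of_mem_of_not_mem (s.orderEmbOfFin_mem rfl j) hi
  rw [Function.comp_apply, Basis.coord_apply, Basis.repr_self, Finsupp.single_eq_of_ne' hne]

end Basis

section BerezinIntegral

open CliffordAlgebra (contractLeft)
open Module (Basis)

variable {R M N : Type*} [CommRing R] [AddCommGroup M] [Module R M] [AddCommGroup N] [Module R N]

/-- A Berezin integral on a purely odd space: a linear map on the algebra of functions, here the
exterior algebra of the module `M` of linear coordinates, that is invariant under translations.
The constant vector fields are the elements of the dual of `M`, acting by left contraction. -/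
def IsBerezinIntegral (T : ExteriorAlgebra R M →ₗ[R] N) : Prop :=
  ∀ (d : Module.Dual R M) (ω : ExteriorAlgebra R M), T (contractLeft d ω) = 0

theorem IsBerezinIntegral.apply_basis_of_notMem {T : ExteriorAlgebra R M →ₗ[R] N}
    (hT : IsBerezinIntegral T) {I : Type*} [LinearOrder I] (b : Basis I R M) {s : Finset I} {i : I}
    (hi : i ∉ s) : T (b.ExteriorAlgebra s) = 0 := by
  have coord_self : b.coord i (b i) = 1 := by
    rw [Basis.coord_apply, Basis.repr_self, Finsupp.single_eq_same]
  rw [← contractLeft_ι_mul_eq_self coord_self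
    (contractLeft_coord_basis_exteriorAlgebra_of_notMem b hi)]
  exact hT _ _

theorem berezin_integral_uniqueness_general {I : Type*} [LinearOrder I] [Fintype I]
    (b : Basis I R M) {T : ExteriorAlgebra R M →ₗ[R] N} (hT : IsBerezinIntegral T)
    (hTop : T (b.ExteriorAlgebra Finset.univ) = 0) : T = 0 := by
  refine b.ExteriorAlgebra.ext fun s => ?_
  rw [LinearMap.zero_apply]
  by_cases hs : s = Finset.univ
  · rw [hs, hTop]
  · obtain ⟨i, hi⟩ : ∃ i, i ∉ s := by simpa [Finset.eq_univ_iff_forall] using hs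
    exact hT.apply_basis_of_notMem b hi

end BerezinIntegral

/-- Section 3.1, uniqueness of the Berezin integral on a purely odd space: a linear
functional `T` on `Λ(ℝⁿ)` vanishing on all left contractions `∂_d ω` and on the top
product `ι e₁ ⋯ ι eₙ` is zero. -/
theorem berezin_integral_uniqueness
    (n : ℕ)
    (D : Module.Dual ℝ (Fin n → ℝ) →
      ExteriorAlgebra ℝ (Fin n → ℝ) →ₗ[ℝ] ExteriorAlgebra ℝ (Fin n → ℝ))
    (hD1 : ∀ d, D d 1 = 0)
    (hD2 : ∀ d x, D d (ExteriorAlgebra.ι ℝ x) = d x • (1 : ExteriorAlgebra ℝ (Fin n → ℝ)))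
    (hD3 : ∀ d x ω, D d (ExteriorAlgebra.ι ℝ x * ω)
      = d x • ω - ExteriorAlgebra.ι ℝ x * D d ω)
    (T : ExteriorAlgebra ℝ (Fin n → ℝ) →ₗ[ℝ] ℝ)
    (hT : ∀ d ω, T (D d ω) = 0)
    (hTop : T ((List.ofFn fun i : Fin n =>
      ExteriorAlgebra.ι ℝ (Pi.single i 1 : Fin n → ℝ))).prod = 0) :
    T = 0 := by
  have hD (d) : D d = CliffordAlgebra.contractLeft d := eq_contractLeft_of_leibniz (hD1 d) (hD3 d)
  refine berezin_integral_uniqueness_general (Pi.basisFun ℝ (Fin n)) (fun d ω => hD d ▸ hT d ω) ?_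
  simpa only [basis_exteriorAlgebra_univ, Pi.basisFun_apply] using hTop
end

section
/- Let φ : ℝ → ℂ be a smooth compactly supported function with φ(0) = 0, and let g : ℝ → ℂ be the continuous function g(z) = φ(z)/z for z ≠ 0 and g(0) = φ′(0). Define F : ℝ → ℂ by F(w) = ∫_ℝ g(z) · exp(−i·w/z) dz, the integrand being set to 0 at z = 0. Then F is rapidly decreasing: for every N ∈ ℕ there exists C ≥ 0 such that (1 + |w|)^N · |F(w)| ≤ C for all w ∈ ℝ. -/
open MeasureTheory

/-!
The phase `e^{-iw/z}` satisfies `∂_z e^{-iw/z} = (iw / z²) e^{-iw/z}`. Integrating by parts against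
`z φ(z)`, which vanishes to second order at `0` when `φ 0 = 0`, therefore gives
`iw ∫ e^{-iw/z} z⁻¹ φ(z) dz = -∫ e^{-iw/z} (z φ)'(z) dz = -∫ e^{-iw/z} z⁻¹ ψ(z) dz`
with `ψ z = z (z φ)'(z)`. Since `ψ` is again a Schwartz function vanishing at `0`, the step can be
repeated, and each repetition gains a factor `|w|`.
-/

open Topology Asymptotics SchwartzMap

variable {E : Type*} [NormedAddCommGroup E]

section RealSpace

variable [NormedSpace ℝ E]

theorem integrable_inv_smul_of_differentiableAt {f : ℝ → E} (hf : Integrable f)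
    (hf_diff : DifferentiableAt ℝ f 0) (hf_zero : f 0 = 0) :
    Integrable fun z : ℝ ↦ z⁻¹ • f z := by
  have hf_bigO : f =O[𝓝 0] fun z ↦ z := by
    simpa only [hf_zero, sub_zero] using hf_diff.isBigO_sub
  obtain ⟨c, hc_pos, hc⟩ := hf_bigO.exists_pos
  obtain ⟨δ, hδ, hball⟩ := Metric.eventually_nhds_iff_ball.mp hc.bound
  have hdom : Integrable fun z ↦ (Metric.ball (0 : ℝ) δ).indicator (fun _ ↦ c) z + δ⁻¹ * ‖f z‖ :=
    ((integrable_indicator_iff measurableSet_ball).mpr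
      (integrableOn_const measure_ball_lt_top.ne)).add (hf.norm.const_mul _)
  refine hdom.mono' (measurable_inv.aestronglyMeasurable.smul hf.aestronglyMeasurable)
    (.of_forall fun z ↦ ?_)
  rw [norm_smul, norm_inv]
  by_cases hz : z ∈ Metric.ball 0 δ
  · have near : ‖z‖⁻¹ * ‖f z‖ ≤ c :=
      inv_mul_le_of_le_mul₀ (norm_nonneg z) hc_pos.le (by simpa only [mul_comm] using hball z hz)
    rw [Set.indicator_of_mem hz]
    exact le_add_of_le_of_nonneg near (by positivity)
  · have far : δ ≤ ‖z‖ := by simpa using hz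
    rw [Set.indicator_of_notMem hz, zero_add]
    gcongr

theorem hasDerivAt_zero_smul_of_isBigO_one {𝕜 : Type*} [NormedField 𝕜] [NormedSpace 𝕜 E]
    {c : ℝ → 𝕜} {p : ℝ → E} {x : ℝ} (hc : c =O[𝓝 x] fun _ ↦ (1 : ℝ)) (hp : HasDerivAt p 0 x)
    (hpx : p x = 0) : HasDerivAt (fun z ↦ c z • p z) 0 x := by
  rw [hasDerivAt_iff_isLittleO] at hp ⊢
  simpa only [hpx, smul_zero, sub_zero, one_smul] using hc.smul_isLittleO hp

/-- Multiplication of a Schwartz function by the coordinate `z`. -/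
noncomputable def idSmul : 𝓢(ℝ, E) →L[ℝ] 𝓢(ℝ, E) :=
  smulLeftCLM E (fun z : ℝ ↦ z)

theorem idSmul_apply (φ : 𝓢(ℝ, E)) (z : ℝ) : idSmul φ z = z • φ z :=
  smulLeftCLM_apply_apply .id' φ z

theorem idSmul_apply_zero (φ : 𝓢(ℝ, E)) : idSmul φ 0 = 0 := by
  rw [idSmul_apply, zero_smul]

theorem inv_smul_idSmul_apply (φ : 𝓢(ℝ, E)) {z : ℝ} (hz : z ≠ 0) : z⁻¹ • idSmul φ z = φ z := by
  rw [idSmul_apply, inv_smul_smul₀ hz]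

theorem derivCLM_idSmul_apply_zero (φ : 𝓢(ℝ, E)) : derivCLM ℝ E (idSmul φ) 0 = φ 0 := by
  have hcoe : ⇑(idSmul φ) = fun z ↦ z • φ z := funext (idSmul_apply φ)
  rw [derivCLM_apply, hcoe, deriv_fun_smul differentiableAt_fun_id φ.differentiableAt]
  simp

end RealSpace

variable [NormedSpace ℂ E]

/-- The phase `e^{-iw/z}`, an oscillating factor with an essential singularity at `z = 0`. Division
by zero gives it the value `1` there, which no integral over `z` sees. -/
noncomputable def reciprocalPhase (w z : ℝ) : ℂ :=
  Complex.exp (-Complex.I * ((w : ℂ) / (z : ℂ)))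

theorem norm_reciprocalPhase (w z : ℝ) : ‖reciprocalPhase w z‖ = 1 := by
  simp [reciprocalPhase, Complex.norm_exp, ← Complex.ofReal_div]

theorem measurable_reciprocalPhase (w : ℝ) : Measurable (reciprocalPhase w) := by
  unfold reciprocalPhase
  fun_prop

theorem hasDerivAt_reciprocalPhase (w : ℝ) {z : ℝ} (hz : z ≠ 0) :
    HasDerivAt (reciprocalPhase w) (Complex.I * w * reciprocalPhase w z * ((z ^ 2)⁻¹ : ℝ)) z := by
  have hz' : (z : ℂ) ≠ 0 := Complex.ofReal_ne_zero.mpr hz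
  have hdiv := (Complex.ofRealCLM.hasDerivAt (x := z)).fun_inv hz' |>.const_mul (w : ℂ)
  refine (hdiv.const_mul (-Complex.I)).cexp.congr_deriv ?_
  simp only [reciprocalPhase, Complex.ofRealCLM_apply, Complex.ofReal_inv, Complex.ofReal_pow,
    Complex.ofReal_one, div_eq_mul_inv]
  ring

theorem integrable_reciprocalPhase_smul (w : ℝ) {f : ℝ → E} (hf : Integrable f) :
    Integrable fun z ↦ reciprocalPhase w z • f z :=
  hf.bdd_smul 1 (measurable_reciprocalPhase w).aestronglyMeasurable
    (.of_forall fun z ↦ (norm_reciprocalPhase w z).le)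

/-- The integral `∫ e^{-iw/z} f(z) dz`: the Fourier transform in the variable `u = 1/z` of the
density `f(z) dz`. -/
noncomputable def reciprocalPhaseIntegral (f : ℝ → E) (w : ℝ) : E :=
  ∫ z, reciprocalPhase w z • f z

theorem integral_ite_eq_reciprocalPhaseIntegral (f : ℝ → E) (w : ℝ) :
    ∫ z, (if z = 0 then 0 else reciprocalPhase w z • f z) = reciprocalPhaseIntegral f w := by
  refine integral_congr_ae ?_
  filter_upwards [Measure.ae_ne volume (0 : ℝ)] with z hz
  rw [if_neg hz]

theorem reciprocalPhaseIntegral_congr_of_ne_zero {f g : ℝ → E} (h : ∀ z ≠ 0, f z = g z) :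
    reciprocalPhaseIntegral f = reciprocalPhaseIntegral g := by
  ext w
  refine integral_congr_ae ?_
  filter_upwards [Measure.ae_ne volume (0 : ℝ)] with z hz
  rw [h z hz]

theorem norm_reciprocalPhaseIntegral_le (f : ℝ → E) (w : ℝ) :
    ‖reciprocalPhaseIntegral f w‖ ≤ ∫ z, ‖f z‖ := by
  simpa only [reciprocalPhaseIntegral, norm_smul, norm_reciprocalPhase, one_mul] using
    norm_integral_le_integral_norm fun z ↦ reciprocalPhase w z • f z

theorem hasDerivAt_reciprocalPhase_smul {p p' : ℝ → E} (hp : ∀ z, HasDerivAt p (p' z) z)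
    (hp_zero : p 0 = 0) (hp'_zero : p' 0 = 0) (w z : ℝ) :
    HasDerivAt (fun z ↦ reciprocalPhase w z • p z)
      (reciprocalPhase w z • p' z +
        (Complex.I * w) • reciprocalPhase w z • (z ^ 2)⁻¹ • p z) z := by
  rcases eq_or_ne z 0 with rfl | hz
  · have hp_at_zero : HasDerivAt p 0 0 := hp'_zero ▸ hp 0
    have hbdd : reciprocalPhase w =O[𝓝 0] fun _ ↦ (1 : ℝ) :=
      .of_bound 1 (.of_forall fun z ↦ by rw [norm_reciprocalPhase, norm_one, one_mul])
    simpa [hp_zero, hp'_zero] using hasDerivAt_zero_smul_of_isBigO_one hbdd hp_at_zero hp_zero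
  · refine ((hasDerivAt_reciprocalPhase w hz).fun_smul (hp z)).congr_deriv ?_
    rw [mul_smul, mul_smul, Complex.coe_smul]

theorem smul_reciprocalPhaseIntegral_inv_sq_smul {p p' : ℝ → E}
    (hp : ∀ z, HasDerivAt p (p' z) z) (hp_zero : p 0 = 0) (hp'_zero : p' 0 = 0)
    (hp_int : Integrable p) (hp'_int : Integrable p')
    (hquot_int : Integrable fun z : ℝ ↦ (z ^ 2)⁻¹ • p z) (w : ℝ) :
    (Complex.I * w) • reciprocalPhaseIntegral (fun z ↦ (z ^ 2)⁻¹ • p z) w =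
      -reciprocalPhaseIntegral p' w := by
  have hquot := (integrable_reciprocalPhase_smul w hquot_int).fun_smul (Complex.I * w)
  have hderiv := integrable_reciprocalPhase_smul w hp'_int
  have total := integral_eq_zero_of_hasDerivAt_of_integrable
    (hasDerivAt_reciprocalPhase_smul hp hp_zero hp'_zero w) (hderiv.add hquot)
    (integrable_reciprocalPhase_smul w hp_int)
  rw [integral_add hderiv hquot, integral_smul] at total
  exact eq_neg_of_add_eq_zero_right total

theorem smul_reciprocalPhaseIntegral_inv_smul {φ : 𝓢(ℝ, E)} (hφ : φ 0 = 0) (w : ℝ) :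
    (Complex.I * w) • reciprocalPhaseIntegral (fun z ↦ z⁻¹ • φ z) w =
      -reciprocalPhaseIntegral (fun z ↦ z⁻¹ • idSmul (derivCLM ℝ E (idSmul φ)) z) w := by
  have hquot : (fun z : ℝ ↦ (z ^ 2)⁻¹ • idSmul φ z) = fun z ↦ z⁻¹ • φ z := by
    ext z
    rcases eq_or_ne z 0 with rfl | hz
    · simp
    · rw [sq, mul_inv, mul_smul, inv_smul_idSmul_apply φ hz]
  have hquot_int : Integrable fun z : ℝ ↦ (z ^ 2)⁻¹ • idSmul φ z :=
    hquot ▸ integrable_inv_smul_of_differentiableAt φ.integrable φ.differentiableAt hφ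
  rw [← hquot, reciprocalPhaseIntegral_congr_of_ne_zero fun z hz ↦ inv_smul_idSmul_apply _ hz]
  exact smul_reciprocalPhaseIntegral_inv_sq_smul
    (fun _ ↦ (idSmul φ).differentiableAt.hasDerivAt) (idSmul_apply_zero φ)
    ((derivCLM_idSmul_apply_zero φ).trans hφ) (idSmul φ).integrable
    (derivCLM ℝ E (idSmul φ)).integrable hquot_int w

theorem rapid_decrease_thom_example_general [CompleteSpace E] {φ : 𝓢(ℝ, E)} (hφ : φ 0 = 0)
    (N : ℕ) :
    ∃ C : ℝ, 0 ≤ C ∧ ∀ w : ℝ,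
      (1 + |w|) ^ N * ‖reciprocalPhaseIntegral (fun z ↦ z⁻¹ • φ z) w‖ ≤ C := by
  induction N generalizing φ with
  | zero =>
    exact ⟨∫ z, ‖z⁻¹ • φ z‖, by positivity,
      fun w ↦ by simpa using norm_reciprocalPhaseIntegral_le _ w⟩
  | succ N ih =>
    let ψ := idSmul (derivCLM ℝ E (idSmul φ))
    obtain ⟨C, hC_nonneg, hC⟩ := ih hφ
    obtain ⟨D, hD_nonneg, hD⟩ := ih (idSmul_apply_zero _ : ψ 0 = 0)
    refine ⟨C + D, by positivity, fun w ↦ ?_⟩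
    have gain : |w| * ‖reciprocalPhaseIntegral (fun z ↦ z⁻¹ • φ z) w‖ =
        ‖reciprocalPhaseIntegral (fun z ↦ z⁻¹ • ψ z) w‖ := by
      simpa [norm_smul] using congrArg norm (smul_reciprocalPhaseIntegral_inv_smul hφ w)
    calc
      (1 + |w|) ^ (N + 1) * ‖reciprocalPhaseIntegral (fun z ↦ z⁻¹ • φ z) w‖
      _ = (1 + |w|) ^ N * ‖reciprocalPhaseIntegral (fun z ↦ z⁻¹ • φ z) w‖ +
          (1 + |w|) ^ N * (|w| * ‖reciprocalPhaseIntegral (fun z ↦ z⁻¹ • φ z) w‖) := by ring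
      _ ≤ C + D := by rw [gain]; exact add_le_add (hC w) (hD w)

/-- Example at the end of Section 5: for `φ` smooth, compactly supported, with
`φ 0 = 0`, the function `F w = ∫ (φ z / z) exp(-i w / z) dz` is rapidly
decreasing in `w`. -/
theorem rapid_decrease_thom_example
    (φ : ℝ → ℂ) (hφ : ContDiff ℝ (⊤ : ℕ∞) φ) (hsupp : HasCompactSupport φ)
    (h0 : φ 0 = 0)
    (g : ℝ → ℂ) (hg : ∀ z : ℝ, z ≠ 0 → g z = φ z / z) (hg0 : g 0 = deriv φ 0)
    (F : ℝ → ℂ)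
    (hF : ∀ w : ℝ, F w = ∫ z : ℝ,
      if z = 0 then 0 else g z * Complex.exp (-Complex.I * ((w : ℂ) / (z : ℂ)))) :
    ∀ N : ℕ, ∃ C : ℝ, 0 ≤ C ∧ ∀ w : ℝ, (1 + |w|) ^ N * ‖F w‖ ≤ C := by
  have hgφ : ∀ z ≠ 0, g z = z⁻¹ • φ z := fun z hz ↦ by
    rw [hg z hz, Complex.real_smul, Complex.ofReal_inv, div_eq_inv_mul]
  have hF_eq : F = reciprocalPhaseIntegral fun z ↦ z⁻¹ • φ z := by
    rw [← reciprocalPhaseIntegral_congr_of_ne_zero hgφ]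
    ext w
    simp only [hF, ← integral_ite_eq_reciprocalPhaseIntegral, reciprocalPhase, smul_eq_mul,
      mul_comm (g _)]
  exact hF_eq ▸ rapid_decrease_thom_example_general (φ := hsupp.toSchwartzMap hφ) h0
end

section
/- Let n ≤ N be natural numbers, let Λ = ExteriorAlgebra ℝ (Fin N → ℝ), and let Λ_odd ⊆ Λ be the odd part of Λ, i.e. the span of all products of an odd number of generators ι x with x ∈ ℝ^N. Let W be a real vector space and let c : Finset (Fin n) → W. Suppose that for every function a : Fin n → Λ with a(i) ∈ Λ_odd for all i, one has Σ_{I ⊆ Fin n} (∏_{i ∈ I} a(i)) ⊗ c(I) = 0 in Λ ⊗_ℝ W, where the product over I is taken in increasing order of the indices. Then c(I) = 0 for every I ⊆ Fin n. -/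
open scoped TensorProduct

/-!
Substitute elements of degree one. A surjection `g` of `M` onto a free module with basis `b` lets us
choose `v i ∈ M` with `g (v i) = b i`, and the induced algebra map sends the monomial
`∏_{i ∈ I} v i` to the monomial `∏_{i ∈ I} b i`. The latter form a basis of the exterior algebra, so
the coefficients of any vanishing combination of them are zero. For `n ≤ N` the surjection is the
projection of `ℝᴺ` onto its first `n` coordinates.
-/

section OddSubstitution

open ExteriorAlgebra Module

variable {R M E W κ : Type*} [CommRing R] [AddCommGroup M] [Module R M]
  [AddCommGroup E] [Module R E] [AddCommMonoid W] [Module R W] [LinearOrder κ]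

theorem exteriorAlgebra_basis_eq_prod_ι (b : Basis κ R E) (I : Finset κ) :
    b.ExteriorAlgebra I = (I.sort.map fun i ↦ ι R (b i)).prod := by
  rw [basis_apply_ofCard b rfl, ← I.listMap_orderEmbOfFin_finRange rfl, ιMulti_family, ιMulti_apply,
    Set.powersetCard.ofFinEmbEquiv_symm_apply, List.map_map, List.ofFn_eq_map]
  rfl

theorem exteriorAlgebra_map_prod_ι_eq_basis (b : Basis κ R E) (g : M →ₗ[R] E) {v : κ → M}
    (hv : ∀ i, g (v i) = b i) (I : Finset κ) :
    ExteriorAlgebra.map g (I.sort.map fun i ↦ ι R (v i)).prod = b.ExteriorAlgebra I := by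
  simp [exteriorAlgebra_basis_eq_prod_ι, map_list_prod, Function.comp_def, hv]

theorem eq_zero_of_sum_prod_ι_tmul_eq_zero (b : Basis κ R E) (g : M →ₗ[R] E) {v : κ → M}
    (hv : ∀ i, g (v i) = b i) (c : Finset κ →₀ W)
    (hc : (c.sum fun I w ↦ (I.sort.map fun i ↦ ι R (v i)).prod ⊗ₜ[R] w) = 0) :
    c = 0 := by
  apply TensorProduct.sum_tmul_basis_left_eq_zero b.ExteriorAlgebra
  simpa [Finsupp.sum, exteriorAlgebra_map_prod_ι_eq_basis b g hv] using
    congrArg ((ExteriorAlgebra.map g).toLinearMap.rTensor W) hc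

theorem ι_mem_span_odd_products (x : M) :
    ι R x ∈ Submodule.span R
      {y | ∃ l : List M, Odd l.length ∧ y = (l.map (ι R)).prod} :=
  Submodule.subset_span ⟨[x], by simp⟩

theorem odd_substitution_injectivity_general (b : Basis κ R E) {g : M →ₗ[R] E}
    (hg : Function.Surjective g) (c : Finset κ →₀ W)
    (hsub : ∀ v : κ → M,
      (c.sum fun I w ↦ (I.sort.map fun i ↦ ι R (v i)).prod ⊗ₜ[R] w) = 0) :
    c = 0 := by
  choose v hv using fun i ↦ hg (b i)
  exact eq_zero_of_sum_prod_ι_tmul_eq_zero b g hv c (hsub v)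

end OddSubstitution

/-- Section 1.5.1: injectivity of `φ ↦ φ_P` for `P = Λℝᴺ` with `N ≥ n`.  If the
coefficients `c I ∈ W` of `φ = Σ_I ξ^I c_I` satisfy
`Σ_I (∏_{i ∈ I} a i) ⊗ c I = 0` for every substitution of odd elements
`a i` of the exterior algebra `Λ(ℝᴺ)` for the odd coordinates, then all the
coefficients vanish. -/
theorem odd_substitution_injectivity
    (n N : ℕ) (hnN : n ≤ N)
    (W : Type*) [AddCommGroup W] [Module ℝ W]
    (c : Finset (Fin n) → W)
    (hsub : ∀ a : Fin n → ExteriorAlgebra ℝ (Fin N → ℝ),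
      (∀ i : Fin n, a i ∈ Submodule.span ℝ
        {x : ExteriorAlgebra ℝ (Fin N → ℝ) | ∃ l : List (Fin N → ℝ),
          Odd l.length ∧ x = (l.map (ExteriorAlgebra.ι ℝ)).prod}) →
      ∑ I : Finset (Fin n), (((I.sort (· ≤ ·)).map a).prod) ⊗ₜ[ℝ] c I = 0) :
    ∀ I : Finset (Fin n), c I = 0 := by
  refine DFunLike.congr_fun (odd_substitution_injectivity_general (Pi.basisFun ℝ (Fin n))
    (LinearMap.funLeft_surjective_of_injective ℝ ℝ _ (Fin.castLE_injective hnN))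
    (Finsupp.equivFunOnFinite.symm c) fun v ↦ ?_)
  simpa [Finsupp.sum_fintype] using hsub _ fun i ↦ ι_mem_span_odd_products (v i)
end
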